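/- Theorem A.3 (regularized representation of the elastic double-layer operator K_s, stated at points off the curve). Let Γ be a simple closed C² curve with L-periodic arclength parametrization z and normal n(s) determined by z'(s) = A n(s). In the setting of the fundamental-type tensor E built from Helmholtz solutions γ_s, γ_p (defined on an open set U ⊆ ℝ²), let u : ℝ → ℂ² be C¹ and L-periodic, and let x ∈ ℝ² be such that x − z(s) ∈ U for all s. For each s, let T_yẼ(z(s)) denote the traction with respect to y, with normal n(s) and Lamé constants (λ, μ), applied columnwise to the matrix field y ↦ E(x − y) at y = z(s). Then ∫₀^L (T_yẼ(z(s)))^T u(s) ds = ∫₀^L (−n(s)·(∇γ_s)(x−z(s))) u(s) ds − ∫₀^L (−(∇R)(x−z(s))) (n(s)·u(s)) ds + ∫₀^L (2μ E(x−z(s)) − γ_s(x−z(s)) I) A u'(s) ds, where the gradients of γ_s and R are taken in the argument of E and then evaluated at x − z(s) (so that ∇_y γ_s(x−y) = −(∇γ_s)(x−y), etc.). -/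

import Mathlib

noncomputable section

/-- Points/vectors in the plane. -/
abbrev V2 : Type := Fin 2 → ℝ

/-- Complex 2-vectors. -/
abbrev C2 : Type := Fin 2 → ℂ

/-- The rotation-by-π/2 matrix A = [[0,-1],[1,0]] (real entries). -/
def Arot : Matrix (Fin 2) (Fin 2) ℝ := !![0, -1; 1, 0]

/-- The rotation-by-π/2 matrix A = [[0,-1],[1,0]] (complex entries). -/
def ArotC : Matrix (Fin 2) (Fin 2) ℂ := !![0, -1; 1, 0]

/-- `pd i f x` is the `i`-th partial derivative of `f : ℝ² → ℂ` at `x`. -/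
def pd (i : Fin 2) (f : V2 → ℂ) (x : V2) : ℂ :=
  fderiv ℝ f x (Pi.single i 1)

/-- Directional derivative `(v·∇)f` of a scalar field along the real vector `v`. -/
def dirD (v : V2) (f : V2 → ℂ) (x : V2) : ℂ :=
  (v 0 : ℂ) * pd 0 f x + (v 1 : ℂ) * pd 1 f x


/-- The Hessian matrix of a scalar field. -/
def hess (f : V2 → ℂ) (y : V2) : Matrix (Fin 2) (Fin 2) ℂ :=
  Matrix.of fun i j => pd i (pd j f) y

/-- The fundamental-type tensor `E = (1/μ)γ_s I + (1/(ρω²)) Hess(γ_s − γ_p)`. -/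
def Emat (mu rho om : ℝ) (γs γp : V2 → ℂ) (y : V2) : Matrix (Fin 2) (Fin 2) ℂ :=
  ((mu : ℂ)⁻¹ * γs y) • (1 : Matrix (Fin 2) (Fin 2) ℂ)
    + (((rho * om ^ 2 : ℝ) : ℂ))⁻¹ • hess (fun w => γs w - γp w) y

/-- The traction operator applied columnwise to a matrix field:
`(T_n F)_{·j} = λ(Σ_i ∂_i F_{ij}) n + 2μ (n·∇)F_{·j} + μ(∂₁F_{2j} − ∂₂F_{1j})(n₂, −n₁)`. -/
def tracM (lam mu : ℝ) (n : V2) (F : V2 → Matrix (Fin 2) (Fin 2) ℂ) (x : V2) :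
    Matrix (Fin 2) (Fin 2) ℂ :=
  Matrix.of fun i j =>
    (lam : ℂ) * (∑ l : Fin 2, pd l (fun y => F y l j) x) * (n i : ℂ)
      + 2 * (mu : ℂ) * ((n 0 : ℂ) * pd 0 (fun y => F y i j) x
          + (n 1 : ℂ) * pd 1 (fun y => F y i j) x)
      + (mu : ℂ) * (pd 0 (fun y => F y 1 j) x - pd 1 (fun y => F y 0 j) x)
          * ((![n 1, -n 0] : V2) i : ℂ)

/-!
For any matrix field `F`, the traction is an algebraic combination of the divergence and the curl of
the columns of `F` and of derivatives of `F` along the tangent `A n`. The columns of `Hess R` are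
gradients, so they contribute nothing to the curl of the columns of `E`, and the Helmholtz equations
reduce the divergence of the `i`-th column to `∂ᵢγ_p / (λ + 2μ)`. What remains are first derivatives
of the potentials and the tangential derivative of `2μ E − γ_s I`. Along the closed curve the latter
is a total derivative and is moved onto `u` by integration by parts.
-/

open Filter MeasureTheory Set
open scoped Topology

section PartialDerivatives

variable {f g : V2 → ℂ} {w : V2}

theorem contDiffAt_pd {m n : WithTop ℕ∞} (hf : ContDiffAt ℝ n f w) (hmn : m + 1 ≤ n) (i : Fin 2) :
    ContDiffAt ℝ m (pd i f) w :=
  (hf.fderiv_right hmn).clm_apply contDiffAt_const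

theorem pd_congr (h : f =ᶠ[𝓝 w] g) (i : Fin 2) : pd i f w = pd i g w := by
  rw [pd, h.fderiv_eq, pd]

theorem pd_add (hf : DifferentiableAt ℝ f w) (hg : DifferentiableAt ℝ g w) (i : Fin 2) :
    pd i (fun y => f y + g y) w = pd i f w + pd i g w := by
  simp only [pd, fderiv_fun_add hf hg, add_apply]

theorem pd_sub (hf : DifferentiableAt ℝ f w) (hg : DifferentiableAt ℝ g w) (i : Fin 2) :
    pd i (fun y => f y - g y) w = pd i f w - pd i g w := by
  simp only [pd, fderiv_fun_sub hf hg, sub_apply]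

theorem pd_const_mul (c : ℂ) (hf : DifferentiableAt ℝ f w) (i : Fin 2) :
    pd i (fun y => c * f y) w = c * pd i f w := by
  simp only [pd, fderiv_const_mul hf, smul_apply, smul_eq_mul]

theorem pd_comp_const_sub (f : V2 → ℂ) (x y : V2) (i : Fin 2) :
    pd i (fun y => f (x - y)) y = -pd i f (x - y) := by
  have h := fderiv_comp_smul (f := fun t => f (x + t)) (x := y) (-1 : ℝ)
  simp only [fderiv_comp_add_left, neg_one_smul, ← sub_eq_add_neg] at h
  simp only [pd, h, neg_apply]

theorem pd_comm (hf : ContDiffAt ℝ 2 f w) (i j : Fin 2) : pd i (pd j f) w = pd j (pd i f) w := by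
  have hdiff : DifferentiableAt ℝ (fderiv ℝ f) w :=
    (hf.fderiv_right (m := 1) (by norm_num)).differentiableAt one_ne_zero
  have pd_pd (k l : Fin 2) :
      pd k (pd l f) w = fderiv ℝ (fderiv ℝ f) w (Pi.single k 1) (Pi.single l 1) := by
    have h : HasFDerivAt (pd l f) _ w := hdiff.hasFDerivAt.clm_apply (hasFDerivAt_const _ w)
    simp [pd, h.fderiv]
  rw [pd_pd, pd_pd]
  exact hf.isSymmSndFDerivAt (by simp) _ _

theorem fderiv_apply_eq_dirD (f : V2 → ℂ) (w v : V2) : fderiv ℝ f w v = dirD v f w := by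
  have hv : v = v 0 • (Pi.single 0 1 : V2) + v 1 • (Pi.single 1 1 : V2) := by
    ext i; fin_cases i <;> simp
  conv_lhs => rw [hv]
  simp [pd, dirD]

theorem dirD_neg (v : V2) (f : V2 → ℂ) (w : V2) : dirD (-v) f w = -dirD v f w := by
  simp only [← fderiv_apply_eq_dirD, map_neg]

end PartialDerivatives

section Laplacian

/-- The Laplacian of a scalar field on the plane, written with the partial derivatives `pd`. -/
def lap (f : V2 → ℂ) (y : V2) : ℂ :=
  pd 0 (pd 0 f) y + pd 1 (pd 1 f) y

variable {f g : V2 → ℂ} {w : V2}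

theorem lap_sub (hf : ContDiffAt ℝ 2 f w) (hg : ContDiffAt ℝ 2 g w) :
    lap (fun y => f y - g y) w = lap f w - lap g w := by
  have pd_pd_sub (i : Fin 2) :
      pd i (pd i fun y => f y - g y) w = pd i (pd i f) w - pd i (pd i g) w := by
    have h : pd i (fun y => f y - g y) =ᶠ[𝓝 w] fun y => pd i f y - pd i g y := by
      filter_upwards [hf.eventually (by simp), hg.eventually (by simp)] with y hfy hgy
      exact pd_sub (hfy.differentiableAt two_ne_zero) (hgy.differentiableAt two_ne_zero) i
    rw [pd_congr h, pd_sub]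
    · exact (contDiffAt_pd hf (m := 1) (by norm_num) i).differentiableAt one_ne_zero
    · exact (contDiffAt_pd hg (m := 1) (by norm_num) i).differentiableAt one_ne_zero
  simp only [lap, pd_pd_sub]
  ring

theorem lap_pd (hf : ContDiffAt ℝ 3 f w) (i : Fin 2) : lap (pd i f) w = pd i (lap f) w := by
  have pd_pd_pd (l : Fin 2) : pd l (pd l (pd i f)) w = pd i (pd l (pd l f)) w := by
    have h : pd l (pd i f) =ᶠ[𝓝 w] pd i (pd l f) := by
      filter_upwards [hf.eventually (by simp)] with y hy
      exact pd_comm (hy.of_le (by norm_num)) l i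
    rw [pd_congr h, pd_comm (contDiffAt_pd hf (by norm_num) l)]
  have pd_pd_differentiableAt (l : Fin 2) : DifferentiableAt ℝ (pd l (pd l f)) w :=
    (contDiffAt_pd (contDiffAt_pd hf (m := 2) (by norm_num) l) (m := 1) (by norm_num) l)
      |>.differentiableAt one_ne_zero
  calc lap (pd i f) w = pd i (pd 0 (pd 0 f)) w + pd i (pd 1 (pd 1 f)) w := by
        rw [lap, pd_pd_pd, pd_pd_pd]
    _ = pd i (lap f) w := (pd_add (pd_pd_differentiableAt 0) (pd_pd_differentiableAt 1) i).symm

theorem lap_pd_sub_of_helmholtz {k l : ℂ} (hf : ContDiffAt ℝ 3 f w) (hg : ContDiffAt ℝ 3 g w)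
    (hHf : ∀ᶠ y in 𝓝 w, lap f y + k ^ 2 * f y = 0) (hHg : ∀ᶠ y in 𝓝 w, lap g y + l ^ 2 * g y = 0)
    (i : Fin 2) :
    lap (pd i fun y => f y - g y) w = l ^ 2 * pd i g w - k ^ 2 * pd i f w := by
  have lap_eq : lap (fun y => f y - g y) =ᶠ[𝓝 w] fun y => l ^ 2 * g y - k ^ 2 * f y := by
    filter_upwards [hHf, hHg, hf.eventually (by simp), hg.eventually (by simp)]
      with y hHfy hHgy hfy hgy
    rw [lap_sub (hfy.of_le (by norm_num)) (hgy.of_le (by norm_num))]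
    linear_combination hHfy - hHgy
  have hfd := hf.differentiableAt three_ne_zero
  have hgd := hg.differentiableAt three_ne_zero
  rw [lap_pd (hf.sub hg), pd_congr lap_eq, pd_sub (hgd.const_mul _) (hfd.const_mul _),
    pd_const_mul _ hgd, pd_const_mul _ hfd]

end Laplacian

section Rotation

theorem Arot_mulVec (v : V2) : Arot.mulVec v = ![-v 1, v 0] := by
  simp [Arot, Matrix.vecHead, Matrix.vecTail]

theorem Arot_mulVec_Arot_mulVec (v : V2) : Arot.mulVec (Arot.mulVec v) = -v := by
  ext i
  rw [Arot_mulVec, Arot_mulVec]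
  fin_cases i <;> simp

theorem ArotC_mulVec (c : C2) : ArotC.mulVec c = ![-c 1, c 0] := by
  simp [ArotC, Matrix.vecHead, Matrix.vecTail]

theorem sum_mul_ArotC (c : C2) (j : Fin 2) : ∑ k, c k * ArotC k j = (![c 1, -c 0] : C2) j := by
  fin_cases j <;> simp [ArotC]

end Rotation

section Traction

theorem tracM_comp_const_sub (lam mu : ℝ) (n : V2) (F : V2 → Matrix (Fin 2) (Fin 2) ℂ) (x y : V2) :
    tracM lam mu n (fun y => F (x - y)) y = -tracM lam mu n F (x - y) := by
  ext i j
  simp only [tracM, Matrix.of_apply, Matrix.neg_apply, Fin.sum_univ_two,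
    fun k l : Fin 2 => pd_comp_const_sub (fun y => F y k l) x y]
  ring

/-- With `τ = A n`, the normal derivative of a plane field is the Günter-type combination
`∂ₙF = (div F) n − (curl F) (n₂, −n₁) − (∂_τ F₂, −∂_τ F₁)`. -/
theorem tracM_eq_div_curl_tangential (lam mu : ℝ) (n : V2) (F : V2 → Matrix (Fin 2) (Fin 2) ℂ)
    (w : V2) (i j : Fin 2) :
    tracM lam mu n F w j i
      = ((lam : ℂ) + 2 * mu) * (∑ l, pd l (fun y => F y l i) w) * n j
        - (mu : ℂ) * (pd 0 (fun y => F y 1 i) w - pd 1 (fun y => F y 0 i) w)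
          * ((![n 1, -n 0] : V2) j : ℂ)
        - 2 * (mu : ℂ) * ∑ k, dirD (Arot.mulVec n) (fun y => F y k i) w * ArotC k j := by
  rw [sum_mul_ArotC (fun k => dirD _ (fun y => F y k i) w), Arot_mulVec]
  fin_cases j <;>
  · simp only [tracM, dirD, Matrix.of_apply, Fin.sum_univ_two, Fin.zero_eta, Fin.mk_one,
      Fin.isValue, Matrix.cons_val_zero, Matrix.cons_val_one, Complex.ofReal_neg]
    ring

end Traction

section Tensor

/-- The matrix field `2μ E − γ_s I` acting on `A ∂ₛu` in the regularized double-layer operator. -/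
def regularizedKernel (mu rho om : ℝ) (γs γp : V2 → ℂ) (y : V2) : Matrix (Fin 2) (Fin 2) ℂ :=
  (2 * (mu : ℂ)) • Emat mu rho om γs γp y - γs y • (1 : Matrix (Fin 2) (Fin 2) ℂ)

variable {lam mu rho om : ℝ} {γs γp : V2 → ℂ} {w : V2}

theorem Emat_apply (mu rho om : ℝ) (γs γp : V2 → ℂ) (y : V2) (i j : Fin 2) :
    Emat mu rho om γs γp y i j
      = (mu : ℂ)⁻¹ * (1 : Matrix (Fin 2) (Fin 2) ℂ) i j * γs y
        + ((rho * om ^ 2 : ℝ) : ℂ)⁻¹ * pd i (pd j fun w => γs w - γp w) y := by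
  simp only [Emat, hess, Matrix.add_apply, Matrix.smul_apply, Matrix.of_apply, smul_eq_mul]
  ring

theorem Emat_isSymm (hγs : ContDiffAt ℝ 2 γs w) (hγp : ContDiffAt ℝ 2 γp w) (mu rho om : ℝ) :
    (Emat mu rho om γs γp w).IsSymm := by
  refine Matrix.IsSymm.ext fun i j => ?_
  rw [Emat_apply, Emat_apply, pd_comm (hγs.sub hγp), Matrix.one_apply, Matrix.one_apply]
  simp only [eq_comm]

theorem contDiffAt_pd_pd_sub (hγs : ContDiffAt ℝ 3 γs w) (hγp : ContDiffAt ℝ 3 γp w)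
    (i j : Fin 2) : ContDiffAt ℝ 1 (pd i (pd j fun y => γs y - γp y)) w :=
  contDiffAt_pd (contDiffAt_pd (hγs.sub hγp) (m := 2) (by norm_num) j) (by norm_num) i

theorem contDiffAt_Emat_apply (hγs : ContDiffAt ℝ 3 γs w) (hγp : ContDiffAt ℝ 3 γp w)
    (mu rho om : ℝ) (i j : Fin 2) :
    ContDiffAt ℝ 1 (fun y => Emat mu rho om γs γp y i j) w := by
  simp only [Emat_apply]
  exact (contDiffAt_const.mul (hγs.of_le (by norm_num))).add
    (contDiffAt_const.mul (contDiffAt_pd_pd_sub hγs hγp i j))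

theorem contDiffAt_regularizedKernel_apply (hγs : ContDiffAt ℝ 3 γs w) (hγp : ContDiffAt ℝ 3 γp w)
    (mu rho om : ℝ) (i j : Fin 2) :
    ContDiffAt ℝ 1 (fun y => regularizedKernel mu rho om γs γp y i j) w :=
  (contDiffAt_const.mul (contDiffAt_Emat_apply hγs hγp mu rho om i j)).sub
    ((hγs.of_le (by norm_num)).mul contDiffAt_const)

theorem pd_Emat_apply (hγs : ContDiffAt ℝ 3 γs w) (hγp : ContDiffAt ℝ 3 γp w)
    (mu rho om : ℝ) (k i j : Fin 2) :
    pd k (fun y => Emat mu rho om γs γp y i j) w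
      = (mu : ℂ)⁻¹ * (1 : Matrix (Fin 2) (Fin 2) ℂ) i j * pd k γs w
        + ((rho * om ^ 2 : ℝ) : ℂ)⁻¹ * pd k (pd i (pd j fun y => γs y - γp y)) w := by
  have hγsd := hγs.differentiableAt three_ne_zero
  have hHessd := (contDiffAt_pd_pd_sub hγs hγp i j).differentiableAt one_ne_zero
  simp only [Emat_apply]
  rw [pd_add (hγsd.const_mul _) (hHessd.const_mul _), pd_const_mul _ hγsd, pd_const_mul _ hHessd]

theorem dirD_regularizedKernel_apply (hγs : ContDiffAt ℝ 3 γs w) (hγp : ContDiffAt ℝ 3 γp w)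
    (mu rho om : ℝ) (v : V2) (i j : Fin 2) :
    dirD v (fun y => regularizedKernel mu rho om γs γp y i j) w
      = 2 * (mu : ℂ) * dirD v (fun y => Emat mu rho om γs γp y i j) w
        - dirD v γs w * (1 : Matrix (Fin 2) (Fin 2) ℂ) i j := by
  have hγsd := hγs.differentiableAt three_ne_zero
  have hEd := (contDiffAt_Emat_apply hγs hγp mu rho om i j).differentiableAt one_ne_zero
  have pd_kernel (k : Fin 2) : pd k (fun y => regularizedKernel mu rho om γs γp y i j) w
      = 2 * (mu : ℂ) * pd k (fun y => Emat mu rho om γs γp y i j) w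
        - (1 : Matrix (Fin 2) (Fin 2) ℂ) i j * pd k γs w := by
    simp only [regularizedKernel, Matrix.sub_apply, Matrix.smul_apply, smul_eq_mul,
      mul_comm (γs _)]
    rw [pd_sub (hEd.const_mul _) (hγsd.const_mul _), pd_const_mul _ hEd, pd_const_mul _ hγsd]
  simp only [dirD, pd_kernel]
  ring

theorem curl_Emat_col (hγs : ContDiffAt ℝ 3 γs w) (hγp : ContDiffAt ℝ 3 γp w)
    (mu rho om : ℝ) (i : Fin 2) :
    pd 0 (fun y => Emat mu rho om γs γp y 1 i) w - pd 1 (fun y => Emat mu rho om γs γp y 0 i) w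
      = (mu : ℂ)⁻¹ * ((1 : Matrix (Fin 2) (Fin 2) ℂ) 1 i * pd 0 γs w
          - (1 : Matrix (Fin 2) (Fin 2) ℂ) 0 i * pd 1 γs w) := by
  rw [pd_Emat_apply hγs hγp, pd_Emat_apply hγs hγp,
    pd_comm (contDiffAt_pd (hγs.sub hγp) (by norm_num) i) 0 1]
  ring

theorem ofReal_mu_ne_zero {ks : ℂ} (hrho : rho ≠ 0) (hom : om ≠ 0)
    (hks : mu * ks ^ 2 = rho * om ^ 2) : (mu : ℂ) ≠ 0 := by
  refine left_ne_zero_of_mul (b := ks ^ 2) ?_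
  rw [hks]
  exact_mod_cast mul_ne_zero hrho (pow_ne_zero 2 hom)

theorem div_Emat_col {ks kp : ℂ} (hrho : rho ≠ 0) (hom : om ≠ 0)
    (hks : mu * ks ^ 2 = rho * om ^ 2) (hkp : (lam + 2 * mu) * kp ^ 2 = rho * om ^ 2)
    (hγs : ContDiffAt ℝ 3 γs w) (hγp : ContDiffAt ℝ 3 γp w)
    (hHs : ∀ᶠ y in 𝓝 w, lap γs y + ks ^ 2 * γs y = 0)
    (hHp : ∀ᶠ y in 𝓝 w, lap γp y + kp ^ 2 * γp y = 0) (i : Fin 2) :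
    ((lam : ℂ) + 2 * mu) * ∑ l, pd l (fun y => Emat mu rho om γs γp y l i) w = pd i γp w := by
  have hmu : (mu : ℂ) ≠ 0 := ofReal_mu_ne_zero hrho hom hks
  have hrhoC : (rho : ℂ) ≠ 0 := Complex.ofReal_ne_zero.2 hrho
  have homC : (om : ℂ) ≠ 0 := Complex.ofReal_ne_zero.2 hom
  have trace_eq : ∑ l, pd l (fun y => Emat mu rho om γs γp y l i) w
      = (mu : ℂ)⁻¹ * pd i γs w
        + ((rho * om ^ 2 : ℝ) : ℂ)⁻¹ * lap (pd i fun y => γs y - γp y) w := by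
    simp only [pd_Emat_apply hγs hγp, mul_assoc, Finset.sum_add_distrib, ← Finset.mul_sum,
      Matrix.one_apply, ite_mul, one_mul, zero_mul, Finset.sum_ite_eq', Finset.mem_univ, if_true]
    rw [Fin.sum_univ_two, lap]
  rw [trace_eq, lap_pd_sub_of_helmholtz hγs hγp hHs hHp]
  push_cast
  field_simp
  linear_combination ((lam : ℂ) + 2 * mu) * pd i γs w * (-hks) + mu * pd i γp w * hkp

theorem tracM_Emat_apply {ks kp : ℂ} (hrho : rho ≠ 0) (hom : om ≠ 0)
    (hks : mu * ks ^ 2 = rho * om ^ 2) (hkp : (lam + 2 * mu) * kp ^ 2 = rho * om ^ 2)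
    (hγs : ContDiffAt ℝ 3 γs w) (hγp : ContDiffAt ℝ 3 γp w)
    (hHs : ∀ᶠ y in 𝓝 w, lap γs y + ks ^ 2 * γs y = 0)
    (hHp : ∀ᶠ y in 𝓝 w, lap γp y + kp ^ 2 * γp y = 0) (n : V2) (i j : Fin 2) :
    tracM lam mu n (Emat mu rho om γs γp) w j i
      = dirD n γs w * (1 : Matrix (Fin 2) (Fin 2) ℂ) i j
        - pd i (fun y => γs y - γp y) w * n j
        - ∑ k, dirD (Arot.mulVec n) (fun y => regularizedKernel mu rho om γs γp y i k) w
            * ArotC k j := by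
  have hmu : (mu : ℂ) ≠ 0 := ofReal_mu_ne_zero hrho hom hks
  have dirD_Emat_symm (k : Fin 2) : dirD (Arot.mulVec n) (fun y => Emat mu rho om γs γp y k i) w
      = dirD (Arot.mulVec n) (fun y => Emat mu rho om γs γp y i k) w := by
    have h : (fun y => Emat mu rho om γs γp y k i)
        =ᶠ[𝓝 w] fun y => Emat mu rho om γs γp y i k := by
      filter_upwards [hγs.eventually (by simp), hγp.eventually (by simp)] with y hγsy hγpy
      exact (Emat_isSymm (hγsy.of_le (by norm_num)) (hγpy.of_le (by norm_num)) mu rho om).apply i k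
    simp only [dirD, pd_congr h]
  rw [tracM_eq_div_curl_tangential, div_Emat_col hrho hom hks hkp hγs hγp hHs hHp,
    curl_Emat_col hγs hγp, mul_inv_cancel_left₀ hmu,
    pd_sub (hγs.differentiableAt three_ne_zero) (hγp.differentiableAt three_ne_zero)]
  simp only [dirD_regularizedKernel_apply hγs hγp, dirD_Emat_symm, sub_mul,
    Finset.sum_sub_distrib, mul_assoc, ← Finset.mul_sum]
  rw [sum_mul_ArotC (fun k => (1 : Matrix (Fin 2) (Fin 2) ℂ) i k), Matrix.one_fin_two]
  simp only [dirD, Arot_mulVec]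
  fin_cases i <;> fin_cases j <;>
  · simp only [Fin.zero_eta, Fin.mk_one, Fin.isValue, Matrix.of_apply, Matrix.cons_val',
      Matrix.cons_val_fin_one, Matrix.cons_val_zero, Matrix.cons_val_one, Complex.ofReal_neg]
    ring

theorem sum_tracM_Emat_comp_const_sub_mul {ks kp : ℂ} {x y : V2} (hrho : rho ≠ 0) (hom : om ≠ 0)
    (hks : mu * ks ^ 2 = rho * om ^ 2) (hkp : (lam + 2 * mu) * kp ^ 2 = rho * om ^ 2)
    (hγs : ContDiffAt ℝ 3 γs (x - y)) (hγp : ContDiffAt ℝ 3 γp (x - y))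
    (hHs : ∀ᶠ t in 𝓝 (x - y), lap γs t + ks ^ 2 * γs t = 0)
    (hHp : ∀ᶠ t in 𝓝 (x - y), lap γp t + kp ^ 2 * γp t = 0) (n : V2) (c : C2) (i : Fin 2) :
    ∑ j, tracM lam mu n (fun t => Emat mu rho om γs γp (x - t)) y j i * c j
      = -dirD n γs (x - y) * c i
        - -pd i (fun t => γs t - γp t) (x - y) * (n 0 * c 0 + n 1 * c 1)
        - ∑ k, dirD (-Arot.mulVec n) (fun t => regularizedKernel mu rho om γs γp t i k) (x - y)
            * ArotC.mulVec c k := by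
  have identity_row : (1 : Matrix (Fin 2) (Fin 2) ℂ) i 0 * c 0
      + (1 : Matrix (Fin 2) (Fin 2) ℂ) i 1 * c 1 = c i := by
    rw [← Fin.sum_univ_two fun j => (1 : Matrix (Fin 2) (Fin 2) ℂ) i j * c j]
    exact congrFun (Matrix.one_mulVec c) i
  simp only [tracM_comp_const_sub, Matrix.neg_apply,
    tracM_Emat_apply hrho hom hks hkp hγs hγp hHs hHp, dirD_neg, ArotC_mulVec,
    sum_mul_ArotC fun k => dirD _ (fun t => regularizedKernel mu rho om γs γp t i k) (x - y),
    Fin.sum_univ_two, Matrix.cons_val_zero, Matrix.cons_val_one]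
  linear_combination -dirD n γs (x - y) * identity_row

end Tensor

section ClosedCurve

variable {w v : ℝ → V2} {a b : ℝ}

theorem continuousOn_dirD_comp {f : V2 → ℂ} {S : Set ℝ} (hf : ∀ s ∈ S, ContDiffAt ℝ 1 f (w s))
    (hw : ContinuousOn w S) (hv : ContinuousOn v S) :
    ContinuousOn (fun s => dirD (v s) f (w s)) S := by
  simp only [← fderiv_apply_eq_dirD]
  refine ContinuousOn.clm_apply (fun s hs => ?_) hv
  have h : ContinuousAt (fderiv ℝ f) (w s) :=
    ((hf s hs).fderiv_right (m := 0) (by norm_num)).continuousAt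
  exact h.comp_continuousWithinAt (hw s hs)

theorem continuousOn_pd_comp {f : V2 → ℂ} {S : Set ℝ} (hf : ∀ s ∈ S, ContDiffAt ℝ 1 f (w s))
    (hw : ContinuousOn w S) (i : Fin 2) : ContinuousOn (fun s => pd i f (w s)) S := by
  have h := continuousOn_dirD_comp hf hw (continuousOn_const (c := Pi.single i 1))
  simpa only [← fderiv_apply_eq_dirD, pd] using h

theorem integral_comp_mul_deriv_of_closed {f : V2 → ℂ} {φ : ℝ → ℂ} (hw : ContDiff ℝ 1 w)
    (hf : ∀ s ∈ uIcc a b, ContDiffAt ℝ 1 f (w s)) (hφ : ContDiff ℝ 1 φ)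
    (hwab : w b = w a) (hφab : φ b = φ a) :
    ∫ s in a..b, f (w s) * deriv φ s = -∫ s in a..b, dirD (deriv w s) f (w s) * φ s := by
  have hfw : ∀ s ∈ uIcc a b, HasDerivAt (fun s => f (w s)) (dirD (deriv w s) f (w s)) s := by
    intro s hs
    rw [← fderiv_apply_eq_dirD]
    exact ((hf s hs).differentiableAt one_ne_zero).hasFDerivAt.comp_hasDerivAt s
      (hw.differentiable one_ne_zero s).hasDerivAt
  rw [intervalIntegral.integral_mul_deriv_eq_deriv_mul hfw
    (fun s _ => (hφ.differentiable one_ne_zero s).hasDerivAt)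
    (continuousOn_dirD_comp hf hw.continuous.continuousOn
      (hw.continuous_deriv le_rfl).continuousOn).intervalIntegrable
    ((hφ.continuous_deriv le_rfl).intervalIntegrable _ _), hwab, hφab, sub_self, zero_sub]

theorem continuousOn_sum_dirD_comp_mul {ι : Type*} [Fintype ι] {f : ι → V2 → ℂ} {φ : ℝ → ι → ℂ}
    {S : Set ℝ} (hf : ∀ k, ∀ s ∈ S, ContDiffAt ℝ 1 (f k) (w s))
    (hw : ContinuousOn w S) (hv : ContinuousOn v S) (hφ : ContinuousOn φ S) :
    ContinuousOn (fun s => ∑ k, dirD (v s) (f k) (w s) * φ s k) S :=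
  continuousOn_finsetSum _ fun k _ =>
    (continuousOn_dirD_comp (hf k) hw hv).mul (continuousOn_pi.1 hφ k)

theorem integral_sum_comp_mul_deriv_of_closed {ι : Type*} [Fintype ι] {f : ι → V2 → ℂ}
    {φ : ℝ → ι → ℂ} (hw : ContDiff ℝ 1 w)
    (hf : ∀ k, ∀ s ∈ uIcc a b, ContDiffAt ℝ 1 (f k) (w s)) (hφ : ContDiff ℝ 1 φ)
    (hwab : w b = w a) (hφab : φ b = φ a) :
    ∫ s in a..b, ∑ k, f k (w s) * deriv φ s k
      = -∫ s in a..b, ∑ k, dirD (deriv w s) (f k) (w s) * φ s k := by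
  have hφk (k : ι) : ContDiff ℝ 1 fun s => φ s k := contDiff_pi.1 hφ k
  have deriv_φ (s : ℝ) (k : ι) : deriv φ s k = deriv (fun t => φ t k) s :=
    ((hasDerivAt_pi.1 (hφ.differentiable one_ne_zero s).hasDerivAt) k).deriv.symm
  simp only [deriv_φ]
  rw [intervalIntegral.integral_finsetSum, intervalIntegral.integral_finsetSum,
    ← Finset.sum_neg_distrib]
  · exact Finset.sum_congr rfl fun k _ =>
      integral_comp_mul_deriv_of_closed hw (hf k) (hφk k) hwab (congrFun hφab k)
  · intro k _
    exact ((continuousOn_dirD_comp (hf k) hw.continuous.continuousOn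
      (hw.continuous_deriv le_rfl).continuousOn).mul
      (hφk k).continuous.continuousOn).intervalIntegrable
  · intro k _
    have hfw : ContinuousOn (fun s => f k (w s)) (uIcc a b) := fun s hs =>
      (hf k s hs).continuousAt.comp_continuousWithinAt hw.continuous.continuousWithinAt
    exact (hfw.mul ((hφk k).continuous_deriv le_rfl).continuousOn).intervalIntegrable

end ClosedCurve

section MatrixCurve

theorem contDiff_mulVec {m n : Type*} [Fintype m] [Fintype n] {u : ℝ → n → ℂ} {k : WithTop ℕ∞}
    (hu : ContDiff ℝ k u) (M : Matrix m n ℂ) : ContDiff ℝ k fun s => M.mulVec (u s) :=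
  (M.mulVecLin.toContinuousLinearMap.restrictScalars ℝ).contDiff.comp hu

theorem deriv_mulVec {m n : Type*} [Finite m] [Fintype n] {u : ℝ → n → ℂ} {s : ℝ}
    (hu : DifferentiableAt ℝ u s) (M : Matrix m n ℂ) :
    deriv (fun s => M.mulVec (u s)) s = M.mulVec (deriv u s) := by
  cases nonempty_fintype m
  exact ((M.mulVecLin.toContinuousLinearMap.restrictScalars ℝ).hasFDerivAt.comp_hasDerivAt s
    hu.hasDerivAt).deriv

end MatrixCurve

theorem mul_sq_waveNumber {m rho : ℝ} (hm : 0 < m) (hrho : 0 ≤ rho) (om : ℝ) :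
    (m : ℂ) * ((om * Real.sqrt (rho / m) : ℝ) : ℂ) ^ 2 = rho * om ^ 2 := by
  have h : m * (om * Real.sqrt (rho / m)) ^ 2 = rho * om ^ 2 := by
    rw [mul_pow, Real.sq_sqrt (by positivity)]
    field_simp
  exact_mod_cast h

theorem elastic_double_layer_regularization_general {lam mu rho om : ℝ} {ks kp : ℂ}
    (hrho : rho ≠ 0) (hom : om ≠ 0)
    (hks : mu * ks ^ 2 = rho * om ^ 2) (hkp : (lam + 2 * mu) * kp ^ 2 = rho * om ^ 2)
    {L : ℝ} {z : ℝ → V2} (hz : ContDiff ℝ 1 z) (hzcl : z L = z 0)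
    {nn : ℝ → V2} (hnn : ∀ s, deriv z s = Arot.mulVec (nn s))
    {U : Set V2} (hU : IsOpen U) {γs γp : V2 → ℂ}
    (hγs : ContDiffOn ℝ 3 γs U) (hγp : ContDiffOn ℝ 3 γp U)
    (hHs : ∀ y ∈ U, lap γs y + ks ^ 2 * γs y = 0) (hHp : ∀ y ∈ U, lap γp y + kp ^ 2 * γp y = 0)
    {u : ℝ → C2} (hu : ContDiff ℝ 1 u) (hucl : u L = u 0)
    {x : V2} (hx : ∀ s ∈ uIcc 0 L, x - z s ∈ U) (i : Fin 2) :
    (∫ s in (0 : ℝ)..L, ∑ j,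
        tracM lam mu (nn s) (fun y => Emat mu rho om γs γp (x - y)) (z s) j i * u s j)
      = (∫ s in (0 : ℝ)..L, -dirD (nn s) γs (x - z s) * u s i)
        - (∫ s in (0 : ℝ)..L, -pd i (fun w => γs w - γp w) (x - z s)
            * (nn s 0 * u s 0 + nn s 1 * u s 1))
        + ∫ s in (0 : ℝ)..L, ∑ k, regularizedKernel mu rho om γs γp (x - z s) i k
            * ArotC.mulVec (deriv u s) k := by
  have hUx (s) (hs : s ∈ uIcc 0 L) : U ∈ 𝓝 (x - z s) := hU.mem_nhds (hx s hs)
  have hγsx (s) (hs : s ∈ uIcc 0 L) : ContDiffAt ℝ 3 γs (x - z s) := hγs.contDiffAt (hUx s hs)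
  have hγpx (s) (hs : s ∈ uIcc 0 L) : ContDiffAt ℝ 3 γp (x - z s) := hγp.contDiffAt (hUx s hs)
  have hkernel (k) (s) (hs : s ∈ uIcc 0 L) :
      ContDiffAt ℝ 1 (fun y => regularizedKernel mu rho om γs γp y i k) (x - z s) :=
    contDiffAt_regularizedKernel_apply (hγsx s hs) (hγpx s hs) mu rho om i k
  have hw : ContDiff ℝ 1 fun s => x - z s := contDiff_const.sub hz
  have deriv_w (s : ℝ) : deriv (fun s => x - z s) s = -Arot.mulVec (nn s) := by
    rw [deriv_const_sub, hnn]
  have by_parts := integral_sum_comp_mul_deriv_of_closed hw hkernel (contDiff_mulVec hu ArotC)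
    (by rw [hzcl]) (by rw [hucl])
  simp only [deriv_mulVec (hu.differentiable one_ne_zero _), deriv_w] at by_parts
  have nn_eq (s : ℝ) : nn s = -Arot.mulVec (deriv z s) := by
    rw [hnn, Arot_mulVec_Arot_mulVec, neg_neg]
  have hnnc : Continuous nn := by
    rw [funext nn_eq]
    exact (continuous_const.matrix_mulVec (hz.continuous_deriv le_rfl)).neg
  have huc := hu.continuous
  have hwc : ContinuousOn (fun s => x - z s) (uIcc 0 L) := hw.continuous.continuousOn
  have int_normal : IntervalIntegrable (fun s => -dirD (nn s) γs (x - z s) * u s i) volume 0 L :=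
    ((continuousOn_dirD_comp (fun s hs => (hγsx s hs).of_le (by norm_num)) hwc
      hnnc.continuousOn).neg.mul (by fun_prop)).intervalIntegrable
  have int_gradient : IntervalIntegrable (fun s => -pd i (fun w => γs w - γp w) (x - z s)
      * (nn s 0 * u s 0 + nn s 1 * u s 1)) volume 0 L :=
    ((continuousOn_pd_comp (fun s hs => ((hγsx s hs).sub (hγpx s hs)).of_le (by norm_num)) hwc
      i).neg.mul (by fun_prop)).intervalIntegrable
  have int_tangential : IntervalIntegrable (fun s => ∑ k, dirD (-Arot.mulVec (nn s))
      (fun y => regularizedKernel mu rho om γs γp y i k) (x - z s) * ArotC.mulVec (u s) k)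
      volume 0 L :=
    (continuousOn_sum_dirD_comp_mul hkernel hwc
      (continuous_const.matrix_mulVec hnnc).neg.continuousOn
      (contDiff_mulVec hu ArotC).continuous.continuousOn).intervalIntegrable
  rw [by_parts, ← sub_eq_add_neg, ← intervalIntegral.integral_sub int_normal int_gradient,
    ← intervalIntegral.integral_sub (int_normal.sub int_gradient) int_tangential]
  exact intervalIntegral.integral_congr fun s hs =>
    sum_tracM_Emat_comp_const_sub_mul hrho hom hks hkp (hγsx s hs) (hγpx s hs)
      (eventually_of_mem (hUx s hs) hHs) (eventually_of_mem (hUx s hs) hHp) (nn s) (u s) i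

/-- Theorem A.3 (regularized representation of the elastic double-layer operator `K_s`,
stated at points off the curve):
`∫₀^L (T_yẼ(z(s)))^T u(s) ds = ∫₀^L (−n(s)·(∇γ_s)(x−z(s))) u(s) ds
  − ∫₀^L (−(∇R)(x−z(s))) (n(s)·u(s)) ds
  + ∫₀^L (2μ E(x−z(s)) − γ_s(x−z(s)) I) A u'(s) ds`, componentwise. -/
theorem elastic_double_layer_regularization (lam mu rho om ks kp : ℝ)
    (hmu : 0 < mu) (hlm : 0 < lam + mu) (hrho : 0 < rho) (hom : 0 < om)
    (hks : ks = om * Real.sqrt (rho / mu)) (hkp : kp = om * Real.sqrt (rho / (lam + 2 * mu)))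
    (L : ℝ) (hL : 0 < L) (z : ℝ → V2) (hz : ContDiff ℝ 2 z)
    (hzper : Function.Periodic z L) (hzinj : Set.InjOn z (Set.Ico 0 L))
    (harc : ∀ s : ℝ, (deriv z s 0) ^ 2 + (deriv z s 1) ^ 2 = 1)
    (nn : ℝ → V2) (hnn : ∀ s : ℝ, deriv z s = Arot.mulVec (nn s))
    (U : Set V2) (hU : IsOpen U) (γs γp : V2 → ℂ)
    (hγs : ContDiffOn ℝ 3 γs U) (hγp : ContDiffOn ℝ 3 γp U)
    (hHs : ∀ y ∈ U, pd 0 (pd 0 γs) y + pd 1 (pd 1 γs) y + (ks : ℂ) ^ 2 * γs y = 0)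
    (hHp : ∀ y ∈ U, pd 0 (pd 0 γp) y + pd 1 (pd 1 γp) y + (kp : ℂ) ^ 2 * γp y = 0)
    (u : ℝ → C2) (hu : ContDiff ℝ 1 u) (huper : Function.Periodic u L)
    (x : V2) (hx : ∀ s : ℝ, x - z s ∈ U) :
    ∀ i : Fin 2,
      (∫ s in (0 : ℝ)..L, ∑ j : Fin 2,
          tracM lam mu (nn s) (fun y => Emat mu rho om γs γp (x - y)) (z s) j i * u s j)
        = (∫ s in (0 : ℝ)..L,
              (-((nn s 0 : ℂ) * pd 0 γs (x - z s) + (nn s 1 : ℂ) * pd 1 γs (x - z s))) * u s i)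
          - (∫ s in (0 : ℝ)..L,
              (-(pd i (fun w => γs w - γp w) (x - z s)))
                * ((nn s 0 : ℂ) * u s 0 + (nn s 1 : ℂ) * u s 1))
          + ∫ s in (0 : ℝ)..L, ∑ j : Fin 2,
              ((2 * (mu : ℂ)) • Emat mu rho om γs γp (x - z s)
                - γs (x - z s) • (1 : Matrix (Fin 2) (Fin 2) ℂ)) i j
                * ArotC.mulVec (deriv u s) j := by
  subst hks hkp
  have hlm2 : 0 < lam + 2 * mu := by linarith
  exact elastic_double_layer_regularization_general hrho.ne' hom.ne'
    (mul_sq_waveNumber hmu hrho.le om) (by exact_mod_cast mul_sq_waveNumber hlm2 hrho.le om)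
    (hz.of_le one_le_two) hzper.eq hnn hU hγs hγp hHs hHp hu huper.eq fun s _ => hx s

end
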